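/- There is a constant K > 0 such that for all ρ with Im ρ ≥ 0 and |ρ| ≥ 1: |a(ρ²)| ≤ K·e^{τT} and |d(ρ²)| ≤ K·|ρ|^{−1}·e^{τT}, where τ = Im ρ, a(λ) = α·φ(T,λ) + β·S'(T,λ) − (1 + αβ), and d(λ) = S(T,λ). -/

import Mathlib

open MeasureTheory Set

/-!
The proof follows the energy `E = ‖y'‖² + ‖ρ‖² ‖y‖²` of a solution of `-y'' + q y = ρ² y`. Since
`‖ρ‖² - ρ² = -2iτρ` with `τ = Im ρ`, its derivative
`E' = 2 Re (conj y' · (q + ‖ρ‖² - ρ²) y)` satisfies `E' ≤ (|q| + 2τ) E` when `‖ρ‖ ≥ 1`, so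
Grönwall's inequality gives `E(x) ≤ E(a) exp (∫ |q| + 2τ (x - a))` on each smooth piece
(`energy_growth`). A jump multiplies `E` by a constant independent of `ρ` (`slEnergy_jump`), whence
`E(T) ≤ M E(0) exp (2τT)` (`slEnergy_growth`). The initial energies of `S` and `C` are `1` and
`‖ρ‖²`, which yields `‖S‖ ≲ ‖ρ‖⁻¹ exp (τT)`, `‖S'‖ ≲ exp (τT)` and `‖C‖ ≲ exp (τT)` at `T`.

The integral equations defining a solution do not say that the integrands are integrable; that is
a consequence of the same energy bound (`integrable_of_integral_equations`).
-/

/-- `PiecewiseSLSol q N b γ η lam y y'` : the family of pieces `y j` (with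
derivatives `y' j`), `j = 1,…,N`, solves `-y'' + q y = lam y` on each subinterval
`[b (j-1), b j]` with the discontinuity (jump) conditions at the interior points. -/
def PiecewiseSLSol (q : ℝ → ℝ) (N : ℕ) (b : ℕ → ℝ) (γ η : ℕ → ℝ) (lam : ℂ)
    (y y' : ℕ → ℝ → ℂ) : Prop :=
  (∀ j, 1 ≤ j → j ≤ N → ∀ x ∈ Icc (b (j - 1)) (b j),
      y j x = y j (b (j - 1)) + ∫ t in (b (j - 1))..x, y' j t) ∧
  (∀ j, 1 ≤ j → j ≤ N → ∀ x ∈ Icc (b (j - 1)) (b j),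
      y' j x = y' j (b (j - 1)) + ∫ t in (b (j - 1))..x, ((q t : ℂ) - lam) * y j t) ∧
  (∀ j, 1 ≤ j → j ≤ N - 1 →
      y (j + 1) (b j) = (γ j : ℂ) * y j (b j) ∧
      y' (j + 1) (b j) = ((γ j : ℂ))⁻¹ * y' j (b j) + (η j : ℂ) * y j (b j))

/-! ### Grönwall's inequality and the energy on a smooth piece -/

/-- Grönwall's inequality for an absolutely continuous function with an integrable rate: the product
`f · exp (-∫ k)` is absolutely continuous with almost everywhere nonpositive derivative. -/
theorem gronwall_absolutelyContinuous {a c : ℝ} (hac : a ≤ c) {f k : ℝ → ℝ}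
    (hf : AbsolutelyContinuousOnInterval f a c) (hk : IntervalIntegrable k volume a c)
    (hk0 : ∀ x, 0 ≤ k x)
    (hfk : ∀ᵐ x, x ∈ Icc a c → deriv f x ≤ k x * f x) :
    f c ≤ f a * Real.exp (∫ t in a..c, k t) := by
  have hacm : a ∈ uIcc a c := left_mem_uIcc
  have hK := hk.absolutelyContinuousOnInterval_intervalIntegral hacm
  set g : ℝ → ℝ := fun x => Real.exp (-∫ t in a..x, k t) with hg
  have hgAC : AbsolutelyContinuousOnInterval g a c := by
    rw [absolutelyContinuousOnInterval_iff] at hK ⊢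
    intro ε hε
    obtain ⟨δ, hδ, H⟩ := hK ε hε
    refine ⟨δ, hδ, fun E hE hEδ => lt_of_le_of_lt (Finset.sum_le_sum fun i hi => ?_) (H E hE hEδ)⟩
    have hm := hE.1 i hi
    rw [uIcc_of_le hac] at hm
    have h1 : ∀ x ∈ Icc a c, 0 ≤ ∫ t in a..x, k t := fun x hx =>
      intervalIntegral.integral_nonneg hx.1 fun t _ => hk0 t
    -- `exp` is 1-Lipschitz on `(-∞, 0]`
    have key : ∀ u v : ℝ, 0 ≤ u → 0 ≤ v → Real.exp (-u) - Real.exp (-v) ≤ |u - v| := by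
      intro u v hu hv
      rcases le_total u v with huv | huv
      · have e1 : Real.exp (-u) ≤ 1 := by simpa using hu
        have e2 := Real.add_one_le_exp (u - v)
        have e3 : Real.exp (-v) = Real.exp (-u) * Real.exp (u - v) := by
          rw [← Real.exp_add]; congr 1; ring
        have e4 := Real.exp_pos (-u)
        rw [abs_of_nonpos (by linarith), e3]
        nlinarith
      · have : Real.exp (-u) ≤ Real.exp (-v) := by gcongr
        linarith [abs_nonneg (u - v)]
    rw [Real.dist_eq, Real.dist_eq, abs_le]
    have h2 := key _ _ (h1 _ hm.1) (h1 _ hm.2)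
    have h3 := key _ _ (h1 _ hm.2) (h1 _ hm.1)
    rw [abs_sub_comm] at h3
    exact ⟨by linarith, by linarith⟩
  have hI := hf.integral_deriv_mul_eq_sub hgAC
  have hneg : 0 ≤ ∫ x in a..c, -(deriv f x * g x + f x * deriv g x) := by
    apply intervalIntegral.integral_nonneg_of_ae_restrict hac
    rw [Filter.EventuallyLE, ae_restrict_iff' measurableSet_Icc]
    filter_upwards [hfk, hk.ae_hasDerivAt_integral] with x hx hx' hxm
    have h1 := (hx' (by rwa [uIcc_of_le hac]) a hacm).neg.exp
    have h2 : deriv g x = g x * -k x := h1.deriv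
    have h3 := hx hxm
    have h4 : 0 < g x := Real.exp_pos _
    rw [h2]
    simp only [Pi.zero_apply]
    nlinarith
  rw [intervalIntegral.integral_neg, hI] at hneg
  have ga : g a = 1 := by simp [hg]
  have gc : g c * Real.exp (∫ t in a..c, k t) = 1 := by
    rw [hg, ← Real.exp_add]; simp
  have : f c * g c ≤ f a := by rw [ga] at hneg; linarith
  calc f c = (f c * g c) * Real.exp (∫ t in a..c, k t) := by rw [mul_assoc, gc, mul_one]
    _ ≤ _ := by gcongr

/-- A real-linear functional of a complex primitive is absolutely continuous, with the expected
derivative almost everywhere. It is applied to the real and imaginary parts. -/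
theorem component_primitive {a c : ℝ} (hac : a ≤ c) {f : ℝ → ℂ} (z₀ : ℂ)
    (hf : IntervalIntegrable f volume a c) (L : ℂ →L[ℝ] ℝ) :
    AbsolutelyContinuousOnInterval (fun x => L (z₀ + ∫ t in a..x, f t)) a c ∧
    ∀ᵐ x, x ∈ Icc a c →
      HasDerivAt (fun x => L (z₀ + ∫ t in a..x, f t)) (L (f x)) x := by
  constructor
  · have hLf : IntervalIntegrable (fun t => L (f t)) volume a c :=
      ⟨L.integrable_comp hf.1, L.integrable_comp hf.2⟩
    have h1 := hLf.absolutelyContinuousOnInterval_intervalIntegral (left_mem_uIcc (a := a) (b := c))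
    have h2 : AbsolutelyContinuousOnInterval (fun _ : ℝ => L z₀) a c :=
      (LipschitzWith.const (L z₀)).lipschitzOnWith.absolutelyContinuousOnInterval
    have h3 := h2.add h1
    rw [absolutelyContinuousOnInterval_iff] at h3 ⊢
    intro ε hε
    obtain ⟨δ, hδ, H⟩ := h3 ε hε
    refine ⟨δ, hδ, fun E hE hEδ => lt_of_le_of_lt (le_of_eq ?_) (H E hE hEδ)⟩
    refine Finset.sum_congr rfl fun i hi => ?_
    have hm := hE.1 i hi
    have e : ∀ x ∈ uIcc a c, L (z₀ + ∫ t in a..x, f t) = L z₀ + ∫ t in a..x, L (f t) := by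
      intro x hx
      rw [map_add, L.intervalIntegral_comp_comm]
      exact hf.mono_set (uIcc_subset_uIcc left_mem_uIcc hx)
    rw [e _ hm.1, e _ hm.2]
    rfl
  · filter_upwards [hf.ae_hasDerivAt_integral] with x hx hxm
    have h1 := hx (by rwa [uIcc_of_le hac]) a left_mem_uIcc
    exact L.hasFDerivAt.comp_hasDerivAt x (h1.const_add z₀)

/-- Growth of the energy `‖y'‖² + ‖ρ‖² ‖y‖²` along a solution of `-y'' + q y = ρ² y`, given that the
integrands are integrable. -/
theorem energy_growth {a c : ℝ} (hac : a ≤ c) {q : ℝ → ℝ} (hq : IntervalIntegrable q volume a c)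
    {ρ : ℂ} (hρ : 0 ≤ ρ.im) (hρ1 : 1 ≤ ‖ρ‖) {z p : ℝ → ℂ}
    (hz : ∀ x ∈ Icc a c, z x = z a + ∫ t in a..x, p t)
    (hp : ∀ x ∈ Icc a c, p x = p a + ∫ t in a..x, ((q t : ℂ) - ρ ^ 2) * z t)
    (hip : IntervalIntegrable p volume a c)
    (hiz : IntervalIntegrable (fun t => ((q t : ℂ) - ρ ^ 2) * z t) volume a c) :
    ‖p c‖ ^ 2 + ‖ρ‖ ^ 2 * ‖z c‖ ^ 2 ≤
      (‖p a‖ ^ 2 + ‖ρ‖ ^ 2 * ‖z a‖ ^ 2) * Real.exp (∫ t in a..c, (|q t| + 2 * ρ.im)) := by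
  set Z : ℝ → ℂ := fun x => z a + ∫ t in a..x, p t with hZ
  set P : ℝ → ℂ := fun x => p a + ∫ t in a..x, ((q t : ℂ) - ρ ^ 2) * z t with hP
  obtain ⟨z1, dz1⟩ := component_primitive hac (z a) hip Complex.reCLM
  obtain ⟨z2, dz2⟩ := component_primitive hac (z a) hip Complex.imCLM
  obtain ⟨p1, dp1⟩ := component_primitive hac (p a) hiz Complex.reCLM
  obtain ⟨p2, dp2⟩ := component_primitive hac (p a) hiz Complex.imCLM
  simp only [Complex.reCLM_apply, Complex.imCLM_apply] at z1 dz1 z2 dz2 p1 dp1 p2 dp2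
  have nsq : ∀ w : ℂ, ‖w‖ ^ 2 = w.re * w.re + w.im * w.im := fun w => by
    rw [Complex.sq_norm, Complex.normSq_apply]
  set f : ℝ → ℝ := fun x => ((P x).re * (P x).re + (P x).im * (P x).im) +
    ‖ρ‖ ^ 2 * ((Z x).re * (Z x).re + (Z x).im * (Z x).im) with hf
  have hfAC : AbsolutelyContinuousOnInterval f a c :=
    ((p1.fun_mul p1).fun_add (p2.fun_mul p2)).fun_add
      (((z1.fun_mul z1).fun_add (z2.fun_mul z2)).const_mul (‖ρ‖ ^ 2))
  have hk : IntervalIntegrable (fun t => |q t| + 2 * ρ.im) volume a c :=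
    hq.abs.add intervalIntegrable_const
  have main := gronwall_absolutelyContinuous hac hfAC hk (fun x => by positivity) ?_
  · have key : ∀ x ∈ Icc a c, ‖p x‖ ^ 2 + ‖ρ‖ ^ 2 * ‖z x‖ ^ 2 = f x := by
      intro x hx
      rw [nsq (p x), nsq (z x), hp x hx, hz x hx]
    rw [key c ⟨hac, le_rfl⟩, key a ⟨le_rfl, hac⟩]
    exact main
  · filter_upwards [dz1, dz2, dp1, dp2] with x h1 h2 h3 h4 hx
    have h1 := h1 hx
    have h2 := h2 hx
    have h3 := h3 hx
    have h4 := h4 hx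
    have hd := ((h3.fun_mul h3).fun_add (h4.fun_mul h4)).fun_add
      (((h1.fun_mul h1).fun_add (h2.fun_mul h2)).const_mul (‖ρ‖ ^ 2))
    have hd' : deriv f x = _ := hd.deriv
    have eZ : Z x = z x := (hz x hx).symm
    have eP : P x = p x := (hp x hx).symm
    rw [hd', hf]
    change _ ≤ (|q x| + 2 * ρ.im) * (((P x).re * (P x).re + (P x).im * (P x).im) +
      ‖ρ‖ ^ 2 * ((Z x).re * (Z x).re + (Z x).im * (Z x).im))
    change (_ * (P x).re + (P x).re * _ + (_ * (P x).im + (P x).im * _)) + _ *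
      (_ * (Z x).re + (Z x).re * _ + (_ * (Z x).im + (Z x).im * _)) ≤ _
    rw [eZ, eP]
    have hρ2 : 1 ≤ ‖ρ‖ ^ 2 := one_le_pow₀ hρ1
    rw [nsq ρ] at hρ2 ⊢
    simp only [Complex.mul_re, Complex.mul_im, Complex.sub_re, Complex.sub_im, pow_two,
      Complex.ofReal_re, Complex.ofReal_im]
    generalize (p x).re = a1
    generalize (p x).im = a2
    generalize (z x).re = u1
    generalize (z x).im = u2
    generalize hs : ρ.re = s at *
    generalize ht : ρ.im = t at *
    have hq1 : q x * (2 * (a1 * u1 + a2 * u2)) ≤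
        |q x| * (a1 * a1 + a2 * a2 + (s * s + t * t) * (u1 * u1 + u2 * u2)) := by
      have hb : |2 * (a1 * u1 + a2 * u2)| ≤
          a1 * a1 + a2 * a2 + (s * s + t * t) * (u1 * u1 + u2 * u2) := by
        have : u1 * u1 + u2 * u2 ≤ (s * s + t * t) * (u1 * u1 + u2 * u2) :=
          le_mul_of_one_le_left (by nlinarith) hρ2
        rw [abs_le]
        constructor
        · nlinarith [sq_nonneg (a1 + u1), sq_nonneg (a2 + u2)]
        · nlinarith [sq_nonneg (a1 - u1), sq_nonneg (a2 - u2)]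
      calc _ ≤ |q x * (2 * (a1 * u1 + a2 * u2))| := le_abs_self _
        _ = |q x| * |2 * (a1 * u1 + a2 * u2)| := abs_mul _ _
        _ ≤ _ := by gcongr
    -- `|ρ|² - ρ² = -2iτρ`, so the `ρ`-part of the derivative is at most `2τ` times the energy
    have hq2 : 0 ≤ 2 * t * ((a1 - t * u1 - s * u2) ^ 2 + (a2 - t * u2 + s * u1) ^ 2) := by
      positivity
    linarith

/-! ### Integrability from the integral equations -/

/-- The integral equations alone force both integrands to be integrable, so that their integrals are
never the junk value `0`. On the largest interval `[a, c)` where `p` is integrable the energy bound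
keeps `p` bounded, hence `p` is integrable on `[a, c]`; if `c < B`, then either the second integrand
is integrable past `c`, which makes `p` continuous there, or `p` is constant past `c`. Both options
contradict the choice of `c`. -/
theorem integrable_of_integral_equations {a B : ℝ} (haB : a ≤ B) {q : ℝ → ℝ}
    (hq : IntervalIntegrable q volume a B)
    {ρ : ℂ} (hρ : 0 ≤ ρ.im) (hρ1 : 1 ≤ ‖ρ‖) {z p : ℝ → ℂ}
    (hz : ∀ x ∈ Icc a B, z x = z a + ∫ t in a..x, p t)
    (hp : ∀ x ∈ Icc a B, p x = p a + ∫ t in a..x, ((q t : ℂ) - ρ ^ 2) * z t) :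
    IntervalIntegrable p volume a B ∧
    IntervalIntegrable (fun t => ((q t : ℂ) - ρ ^ 2) * z t) volume a B := by
  have hsub : ∀ d ∈ Icc a B, uIcc a d ⊆ uIcc a B := fun d hd => by
    rw [uIcc_of_le hd.1, uIcc_of_le haB]; exact Icc_subset_Icc_right hd.2
  have hqc : IntervalIntegrable (fun t => (q t : ℂ) - ρ ^ 2) volume a B :=
    IntervalIntegrable.sub ⟨hq.1.ofReal, hq.2.ofReal⟩ intervalIntegrable_const
  have contz : ∀ d ∈ Icc a B, IntervalIntegrable p volume a d → ContinuousOn z (Icc a d) := by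
    intro d hd hi
    have h1 := intervalIntegral.continuousOn_primitive_interval' hi left_mem_uIcc
    rw [uIcc_of_le hd.1] at h1
    exact (continuousOn_const.add h1).congr fun x hx => hz x ⟨hx.1, hx.2.trans hd.2⟩
  have contp : ∀ d ∈ Icc a B,
      IntervalIntegrable (fun t => ((q t : ℂ) - ρ ^ 2) * z t) volume a d →
      ContinuousOn p (Icc a d) := by
    intro d hd hi
    have h1 := intervalIntegral.continuousOn_primitive_interval' hi left_mem_uIcc
    rw [uIcc_of_le hd.1] at h1
    exact (continuousOn_const.add h1).congr fun x hx => hp x ⟨hx.1, hx.2.trans hd.2⟩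
  have intz : ∀ d ∈ Icc a B, IntervalIntegrable p volume a d →
      IntervalIntegrable (fun t => ((q t : ℂ) - ρ ^ 2) * z t) volume a d := by
    intro d hd hi
    refine (hqc.mono_set (hsub d hd)).mul_continuousOn ?_
    rw [uIcc_of_le hd.1]
    exact contz d hd hi
  have intp : ∀ d ∈ Icc a B,
      IntervalIntegrable (fun t => ((q t : ℂ) - ρ ^ 2) * z t) volume a d →
      IntervalIntegrable p volume a d := by
    intro d hd hi
    apply ContinuousOn.intervalIntegrable
    rw [uIcc_of_le hd.1]
    exact contp d hd hi
  set G : Set ℝ := {x | x ∈ Icc a B ∧ IntervalIntegrable p volume a x} with hG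
  have haG : a ∈ G := ⟨⟨le_rfl, haB⟩, IntervalIntegrable.refl⟩
  have hGb : BddAbove G := ⟨B, fun x hx => hx.1.2⟩
  set c := sSup G with hc
  have hac : a ≤ c := le_csSup hGb haG
  have hcB : c ≤ B := csSup_le ⟨a, haG⟩ fun x hx => hx.1.2
  have hlt : ∀ x < c, ∃ d ∈ G, x < d := fun x hx => exists_lt_of_lt_csSup ⟨a, haG⟩ hx
  set M : ℝ := (‖p a‖ ^ 2 + ‖ρ‖ ^ 2 * ‖z a‖ ^ 2) *
    Real.exp (∫ t in a..B, (|q t| + 2 * ρ.im)) with hM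
  have hkB : IntervalIntegrable (fun t => |q t| + 2 * ρ.im) volume a B :=
    hq.abs.add intervalIntegrable_const
  have hbound : ∀ x ∈ Ico a c, ‖p x‖ ≤ M + 1 := by
    intro x hx
    obtain ⟨d, hd, hxd⟩ := hlt x hx.2
    have hxB : x ∈ Icc a B := ⟨hx.1, hx.2.le.trans hcB⟩
    have hpx : IntervalIntegrable p volume a x :=
      hd.2.mono_set (by rw [uIcc_of_le hx.1, uIcc_of_le hd.1.1]; exact Icc_subset_Icc_right hxd.le)
    have h1 := energy_growth hx.1 (hq.mono_set (hsub x hxB)) hρ hρ1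
      (fun t ht => hz t ⟨ht.1, ht.2.trans hxB.2⟩) (fun t ht => hp t ⟨ht.1, ht.2.trans hxB.2⟩)
      hpx (intz x hxB hpx)
    have h2 : ∫ t in a..x, (|q t| + 2 * ρ.im) ≤ ∫ t in a..B, (|q t| + 2 * ρ.im) :=
      intervalIntegral.integral_mono_interval le_rfl hx.1 hxB.2
        (Filter.Eventually.of_forall fun t => by simp only [Pi.zero_apply]; positivity) hkB
    have h3 : (‖p a‖ ^ 2 + ‖ρ‖ ^ 2 * ‖z a‖ ^ 2) * Real.exp (∫ t in a..x, (|q t| + 2 * ρ.im)) ≤ M := by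
      rw [hM]; gcongr
    have h4 : 0 ≤ ‖ρ‖ ^ 2 * ‖z x‖ ^ 2 := by positivity
    nlinarith [sq_nonneg (‖p x‖ - 1), norm_nonneg (p x)]
  have hpcont : ContinuousOn p (Ico a c) := by
    intro x hx
    obtain ⟨d, hd, hxd⟩ := hlt x hx.2
    have h1 := contp d hd.1 (intz d hd.1 hd.2) x ⟨hx.1, hxd.le⟩
    refine h1.mono_of_mem_nhdsWithin ?_
    filter_upwards [self_mem_nhdsWithin, mem_nhdsWithin_of_mem_nhds (Iio_mem_nhds hxd)] with t h1 h2
    exact ⟨h1.1, le_of_lt h2⟩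
  have hcI : c ∈ Icc a B := ⟨hac, hcB⟩
  have hpc : IntervalIntegrable p volume a c := by
    rw [intervalIntegrable_iff_integrableOn_Ico_of_le hac]
    refine Integrable.of_bound (hpcont.aestronglyMeasurable measurableSet_Ico) (M + 1) ?_
    rw [ae_restrict_iff' measurableSet_Ico]
    exact Filter.Eventually.of_forall hbound
  suffices hpB : IntervalIntegrable p volume a B from ⟨hpB, intz B ⟨haB, le_rfl⟩ hpB⟩
  rcases hcB.eq_or_lt with h | hlt'
  · rwa [h] at hpc
  by_cases H : ∃ d ∈ Ioc c B,
      IntervalIntegrable (fun t => ((q t : ℂ) - ρ ^ 2) * z t) volume a d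
  · obtain ⟨d, hd, hi⟩ := H
    have hdI : d ∈ Icc a B := ⟨hac.trans hd.1.le, hd.2⟩
    exact absurd (le_csSup hGb ⟨hdI, intp d hdI hi⟩) (not_le.mpr hd.1)
  · push Not at H
    -- beyond `c` the integral in the equation for `p` takes its junk value `0`
    refine hpc.trans (IntervalIntegrable.congr (f := fun _ => p a) ?_ intervalIntegrable_const)
    intro t ht
    rw [uIoc_of_le hcB] at ht
    have := hp t ⟨hac.trans ht.1.le, ht.2⟩
    rw [intervalIntegral.integral_undef (H t ht), add_zero] at this
    exact this.symm

/-! ### Energy across the pieces and jumps -/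

/-- The energy `‖y'‖² + ‖ρ‖² ‖y‖²` of the pair `(y, y') = (w, w')`. -/
noncomputable def slEnergy (ρ w w' : ℂ) : ℝ := ‖w'‖ ^ 2 + ‖ρ‖ ^ 2 * ‖w‖ ^ 2

theorem slEnergy_nonneg (ρ w w' : ℂ) : 0 ≤ slEnergy ρ w w' := by
  unfold slEnergy; positivity

theorem slEnergy_interval {a B Q : ℝ} (haB : a ≤ B) {q : ℝ → ℝ}
    (hq : IntervalIntegrable q volume a B) (hQ : ∫ t in a..B, |q t| ≤ Q)
    {ρ : ℂ} (hρ : 0 ≤ ρ.im) (hρ1 : 1 ≤ ‖ρ‖) {z p : ℝ → ℂ}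
    (hz : ∀ x ∈ Icc a B, z x = z a + ∫ t in a..x, p t)
    (hp : ∀ x ∈ Icc a B, p x = p a + ∫ t in a..x, ((q t : ℂ) - ρ ^ 2) * z t) :
    slEnergy ρ (z B) (p B) ≤
      slEnergy ρ (z a) (p a) * (Real.exp Q * Real.exp (2 * ρ.im * (B - a))) := by
  obtain ⟨h1, h2⟩ := integrable_of_integral_equations haB hq hρ hρ1 hz hp
  refine (energy_growth haB hq hρ hρ1 hz hp h1 h2).trans ?_
  have e : ∫ t in a..B, (|q t| + 2 * ρ.im) = (∫ t in a..B, |q t|) + 2 * ρ.im * (B - a) := by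
    rw [intervalIntegral.integral_add hq.abs intervalIntegrable_const,
      intervalIntegral.integral_const, smul_eq_mul, mul_comm (B - a)]
  rw [e, ← Real.exp_add]
  apply mul_le_mul_of_nonneg_left _ (slEnergy_nonneg ρ (z a) (p a))
  gcongr

/-- A jump condition multiplies the energy by at most a constant independent of `ρ`, since
`1 ≤ ‖ρ‖`. -/
theorem slEnergy_jump {ρ : ℂ} (hρ1 : 1 ≤ ‖ρ‖) (g e : ℝ) (w w' : ℂ) :
    slEnergy ρ ((g : ℂ) * w) ((g : ℂ)⁻¹ * w' + (e : ℂ) * w) ≤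
      (2 * g⁻¹ ^ 2 + 2 * e ^ 2 + g ^ 2) * slEnergy ρ w w' := by
  unfold slEnergy
  have hn : ‖(g : ℂ)⁻¹ * w' + (e : ℂ) * w‖ ≤ |g⁻¹| * ‖w'‖ + |e| * ‖w‖ := by
    refine (norm_add_le _ _).trans (le_of_eq ?_)
    rw [norm_mul, norm_mul, ← Complex.ofReal_inv, Complex.norm_real, Complex.norm_real,
      Real.norm_eq_abs, Real.norm_eq_abs]
  have hn2 : ‖(g : ℂ)⁻¹ * w' + (e : ℂ) * w‖ ^ 2 ≤ (|g⁻¹| * ‖w'‖ + |e| * ‖w‖) ^ 2 := by gcongr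
  have hg : ‖(g : ℂ) * w‖ ^ 2 = g ^ 2 * ‖w‖ ^ 2 := by
    rw [norm_mul, mul_pow, Complex.norm_real, Real.norm_eq_abs, sq_abs]
  have h3 : (|g⁻¹| * ‖w'‖ + |e| * ‖w‖) ^ 2 ≤ 2 * g⁻¹ ^ 2 * ‖w'‖ ^ 2 + 2 * e ^ 2 * ‖w‖ ^ 2 := by
    rw [← sq_abs g⁻¹, ← sq_abs e]
    nlinarith [sq_nonneg (|g⁻¹| * ‖w'‖ - |e| * ‖w‖)]
  have hρ2 : 1 ≤ ‖ρ‖ ^ 2 := one_le_pow₀ hρ1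
  have h4 : e ^ 2 * ‖w‖ ^ 2 ≤ ‖ρ‖ ^ 2 * (e ^ 2 * ‖w‖ ^ 2) :=
    le_mul_of_one_le_left (by positivity) hρ2
  rw [hg]
  have h5 : 0 ≤ e ^ 2 * ‖w'‖ ^ 2 := by positivity
  have h6 : 0 ≤ g ^ 2 * ‖w'‖ ^ 2 := by positivity
  have h7 : 0 ≤ g⁻¹ ^ 2 * (‖ρ‖ ^ 2 * ‖w‖ ^ 2) := by positivity
  nlinarith

/-- Energy at the end of the `j`-th piece in terms of the initial energy; the constant `M` depends
neither on `ρ` nor on the solution. -/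
theorem slEnergy_growth {T : ℝ} {q : ℝ → ℝ} (hq : IntegrableOn q (Icc 0 T))
    {N : ℕ} {b : ℕ → ℝ} (γ η : ℕ → ℝ) (hb0 : b 0 = 0) (hbN : b N = T)
    (hbmono : ∀ j < N, b j < b (j + 1)) (j : ℕ) (hj : 1 ≤ j) :
    j ≤ N → ∃ M : ℝ, 0 ≤ M ∧ ∀ ρ : ℂ, 0 ≤ ρ.im → 1 ≤ ‖ρ‖ → ∀ y y' : ℕ → ℝ → ℂ,
      PiecewiseSLSol q N b γ η (ρ ^ 2) y y' →
      slEnergy ρ (y j (b j)) (y' j (b j)) ≤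
        M * slEnergy ρ (y 1 0) (y' 1 0) * Real.exp (2 * ρ.im * b j) := by
  have hmono : ∀ i j, i ≤ j → j ≤ N → b i ≤ b j := by
    intro i j hij
    induction j, hij using Nat.le_induction with
    | base => intro _; rfl
    | succ k _ ih => intro hk; exact (ih (by lia)).trans (hbmono k (by lia)).le
  have hT0 : 0 ≤ T := by rw [← hb0, ← hbN]; exact hmono 0 N (Nat.zero_le _) le_rfl
  have hqT : IntervalIntegrable q volume 0 T := by
    rw [intervalIntegrable_iff_integrableOn_Icc_of_le hT0]; exact hq
  have hpiece : ∀ i < N, IntervalIntegrable q volume (b i) (b (i + 1)) ∧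
      ∫ t in (b i)..(b (i + 1)), |q t| ≤ ∫ t in (0 : ℝ)..T, |q t| := by
    intro i hi
    have h0 : 0 ≤ b i := by rw [← hb0]; exact hmono 0 i (Nat.zero_le _) hi.le
    have h1 : b (i + 1) ≤ T := by rw [← hbN]; exact hmono _ N hi le_rfl
    have h2 := (hbmono i hi).le
    refine ⟨hqT.mono_set ?_, intervalIntegral.integral_mono_interval h0 h2 h1
      (Filter.Eventually.of_forall fun t => abs_nonneg _) hqT.abs⟩
    rw [uIcc_of_le h2, uIcc_of_le hT0]
    exact Icc_subset_Icc h0 h1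
  set Q := ∫ t in (0 : ℝ)..T, |q t|
  induction j, hj using Nat.le_induction with
  | base =>
    intro h1N
    refine ⟨Real.exp Q, (Real.exp_pos _).le, fun ρ hρ hρ1 y y' hy => ?_⟩
    obtain ⟨hi, hQ⟩ := hpiece 0 h1N
    have := slEnergy_interval (hbmono 0 h1N).le hi hQ hρ hρ1 (hy.1 1 le_rfl h1N)
      (hy.2.1 1 le_rfl h1N)
    simp only [zero_add, hb0, sub_zero] at this
    linarith
  | succ j hj ih =>
    intro hjN
    obtain ⟨M, hM0, hM⟩ := ih (by lia)
    have hD : 0 ≤ 2 * (γ j)⁻¹ ^ 2 + 2 * η j ^ 2 + γ j ^ 2 := by positivity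
    refine ⟨Real.exp Q * ((2 * (γ j)⁻¹ ^ 2 + 2 * η j ^ 2 + γ j ^ 2) * M), by positivity,
      fun ρ hρ hρ1 y y' hy => ?_⟩
    obtain ⟨hi, hQ⟩ := hpiece j hjN
    have h1 := slEnergy_interval (hbmono j hjN).le hi hQ hρ hρ1 (hy.1 (j + 1) (by lia) hjN)
      (hy.2.1 (j + 1) (by lia) hjN)
    obtain ⟨j1, j2⟩ := hy.2.2 j hj (by lia)
    rw [j1, j2] at h1
    refine h1.trans ?_
    have h2 := (slEnergy_jump hρ1 (γ j) (η j) (y j (b j)) (y' j (b j))).trans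
      (mul_le_mul_of_nonneg_left (hM ρ hρ hρ1 y y' hy) hD)
    refine (mul_le_mul_of_nonneg_right h2 (by positivity)).trans (le_of_eq ?_)
    have e : Real.exp (2 * ρ.im * b (j + 1)) =
        Real.exp (2 * ρ.im * b j) * Real.exp (2 * ρ.im * (b (j + 1) - b j)) := by
      rw [← Real.exp_add]; congr 1; ring
    rw [e]
    ring

/-- growth estimates for the characteristic functions in the
closed upper half ρ-plane: |a(ρ²)| ≤ K e^{τT} and |d(ρ²)| ≤ K|ρ|⁻¹ e^{τT}
(τ = Im ρ) for Im ρ ≥ 0, |ρ| ≥ 1, where a(λ) = αφ(T,λ) + βS'(T,λ) − (1+αβ),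
φ = C + h·S and d(λ) = S(T,λ). -/
theorem characteristic_function_growth_estimates
    (T : ℝ) (hT : 0 < T) (q : ℝ → ℝ) (hq : IntegrableOn q (Icc 0 T))
    (N : ℕ) (hN : 1 ≤ N) (b : ℕ → ℝ) (γ η : ℕ → ℝ) (h : ℝ)
    (hb0 : b 0 = 0) (hbN : b N = T)
    (hbmono : ∀ j < N, b j < b (j + 1))
    (hγ : ∀ j, 1 ≤ j → j ≤ N - 1 → 0 < γ j)
    (α β : ℝ) (hαβ : 0 < α * β)
    (S S' C C' : ℕ → ℝ → ℂ → ℂ)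
    (hS : ∀ lam : ℂ, PiecewiseSLSol q N b γ η lam
        (fun j x => S j x lam) (fun j x => S' j x lam))
    (hC : ∀ lam : ℂ, PiecewiseSLSol q N b γ η lam
        (fun j x => C j x lam) (fun j x => C' j x lam))
    (hS0 : ∀ lam : ℂ, S 1 0 lam = 0) (hS'0 : ∀ lam : ℂ, S' 1 0 lam = 1)
    (hC0 : ∀ lam : ℂ, C 1 0 lam = 1) (hC'0 : ∀ lam : ℂ, C' 1 0 lam = 0) :
    ∃ K : ℝ, 0 < K ∧ ∀ ρ : ℂ, 0 ≤ ρ.im → 1 ≤ ‖ρ‖ →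
      ‖(α : ℂ) * (C N T (ρ ^ 2) + (h : ℂ) * S N T (ρ ^ 2))
          + (β : ℂ) * S' N T (ρ ^ 2) - (1 + (α : ℂ) * (β : ℂ))‖
        ≤ K * Real.exp (ρ.im * T) ∧
      ‖S N T (ρ ^ 2)‖ ≤ K * ‖ρ‖⁻¹ * Real.exp (ρ.im * T) := by
  obtain ⟨M, hM0, hM⟩ := slEnergy_growth hq γ η hb0 hbN hbmono N hN le_rfl
  set W : ℝ := M + 1 with hW
  have hW0 : 0 < W := by positivity
  have root : ∀ ρ : ℂ, ∀ x c : ℝ, 0 ≤ c → x ^ 2 ≤ M * c ^ 2 * Real.exp (2 * ρ.im * T) →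
      x ≤ W * c * Real.exp (ρ.im * T) := by
    intro ρ x c hc hx
    refine (le_abs_self x).trans (abs_le_of_sq_le_sq ?_ (by positivity))
    refine hx.trans ?_
    have e : Real.exp (2 * ρ.im * T) = Real.exp (ρ.im * T) ^ 2 := by
      rw [← Real.exp_nat_mul]; congr 1; push_cast; ring
    rw [mul_pow, mul_pow, e]
    have : M ≤ W ^ 2 := by nlinarith
    gcongr
  refine ⟨|α| * (W + |h| * W) + |β| * W + (1 + |α| * |β|) + W, by positivity,
    fun ρ hρ hρ1 => ?_⟩
  have hρ0 : 0 < ‖ρ‖ := by linarith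
  have eS := hM ρ hρ hρ1 _ _ (hS (ρ ^ 2))
  have eC := hM ρ hρ hρ1 _ _ (hC (ρ ^ 2))
  simp only [slEnergy, hbN, hS0, hS'0, hC0, hC'0, norm_zero, norm_one] at eS eC
  have b1 : ‖ρ‖ * ‖S N T (ρ ^ 2)‖ ≤ W * 1 * Real.exp (ρ.im * T) := by
    apply root ρ _ 1 zero_le_one
    nlinarith [sq_nonneg ‖S' N T (ρ ^ 2)‖]
  have b2 : ‖S' N T (ρ ^ 2)‖ ≤ W * 1 * Real.exp (ρ.im * T) := by
    apply root ρ _ 1 zero_le_one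
    nlinarith [sq_nonneg (‖ρ‖ * ‖S N T (ρ ^ 2)‖)]
  have b3 : ‖ρ‖ * ‖C N T (ρ ^ 2)‖ ≤ W * ‖ρ‖ * Real.exp (ρ.im * T) := by
    apply root ρ _ ‖ρ‖ hρ0.le
    nlinarith [sq_nonneg ‖C' N T (ρ ^ 2)‖]
  rw [mul_one] at b1 b2
  have b3' : ‖C N T (ρ ^ 2)‖ ≤ W * Real.exp (ρ.im * T) := by
    refine le_of_mul_le_mul_left (b3.trans (le_of_eq ?_)) hρ0
    ring
  have b1' : ‖S N T (ρ ^ 2)‖ ≤ W * Real.exp (ρ.im * T) :=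
    (le_mul_of_one_le_left (norm_nonneg _) hρ1).trans b1
  have hexp : 1 ≤ Real.exp (ρ.im * T) := Real.one_le_exp (by positivity)
  set e := Real.exp (ρ.im * T)
  constructor
  · have hn : ‖(α : ℂ) * (C N T (ρ ^ 2) + (h : ℂ) * S N T (ρ ^ 2))
          + (β : ℂ) * S' N T (ρ ^ 2) - (1 + (α : ℂ) * (β : ℂ))‖ ≤
        |α| * (‖C N T (ρ ^ 2)‖ + |h| * ‖S N T (ρ ^ 2)‖) + |β| * ‖S' N T (ρ ^ 2)‖
          + (1 + |α| * |β|) := by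
      refine (norm_sub_le _ _).trans (add_le_add ((norm_add_le _ _).trans (add_le_add ?_ ?_)) ?_)
      · rw [norm_mul, Complex.norm_real, Real.norm_eq_abs]
        gcongr
        refine (norm_add_le _ _).trans (le_of_eq ?_)
        rw [norm_mul, Complex.norm_real, Real.norm_eq_abs]
      · rw [norm_mul, Complex.norm_real, Real.norm_eq_abs]
      · refine (norm_add_le _ _).trans (le_of_eq ?_)
        rw [norm_one, norm_mul, Complex.norm_real, Complex.norm_real, Real.norm_eq_abs,
          Real.norm_eq_abs]
    calc _ ≤ _ := hn
      _ ≤ |α| * (W * e + |h| * (W * e)) + |β| * (W * e) + (1 + |α| * |β|) * e := by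
        gcongr
        exact le_mul_of_one_le_right (by positivity) hexp
      _ ≤ |α| * (W * e + |h| * (W * e)) + |β| * (W * e) + (1 + |α| * |β|) * e + W * e :=
        le_add_of_nonneg_right (by positivity)
      _ = _ := by ring
  · calc ‖S N T (ρ ^ 2)‖ = ‖ρ‖⁻¹ * (‖ρ‖ * ‖S N T (ρ ^ 2)‖) := by field_simp
      _ ≤ ‖ρ‖⁻¹ * (W * e) := by gcongr
      _ = W * ‖ρ‖⁻¹ * e := by ring
      _ ≤ _ := by
        gcongr
        exact le_add_of_nonneg_left (by positivity)
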